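/- arXiv:2111.13320 — 2 statements merged into one kernel-verified Lean document; each statement's English description precedes it below -/
import Mathlib

section
/- Let d ≥ 2. There exists a constant C ≥ 1 depending only on d such that for every v ∈ ℝ^d \ {0}: (1/C) ⟨v⟩^{−1} ≤ (1/(d−1)) ∫_{ℝ^d} (1/|v_*|)·(d − 2 + ((v·v_*)/(|v||v_*|))²) μ(v − v_*) dv_* ≤ C ⟨v⟩^{−1}. -/
/-!
The weight `d - 2 + cos²θ` lies between `cos²θ` and `d - 1`.

Upper bound: `⟨v⟩ ≤ 1 + |v - w| + |w|`, and the Gaussian absorbs the polynomial factor in `|v - w|`,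
so `⟨v⟩` times the integrand is at most a constant times
`2 · 1_{|w| < 1} |w|⁻¹ + 3 exp (-|v - w|² / 2)` (`integrand_le`). The singularity `|w|⁻¹` is locally
integrable because `d ≥ 2`, and the integral of the Gaussian does not depend on `v`.

Lower bound: the integrand is nonnegative, so it suffices to integrate over the ball of radius `1/2`
around `v + v/|v|`. There `cos θ ≥ 1/3`, `|w| ≤ |v| + 3/2 ≤ (5/2) ⟨v⟩` and `|v - w| ≤ 3/2`, so the
integrand is at least a constant times `⟨v⟩⁻¹` (`le_integrand`). Shifting the centre away from the
origin makes the estimate uniform down to `v → 0`, which matters when `d = 2`.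
-/

open MeasureTheory
open scoped InnerProductSpace

/-- The normalized Maxwellian `μ(v) = π^{-d/2} e^{-|v|²}` on `ℝ^d`. -/
noncomputable def maxw (d : ℕ) (v : EuclideanSpace ℝ (Fin d)) : ℝ :=
  Real.pi ^ (-(d : ℝ) / 2) * Real.exp (-‖v‖ ^ 2)

/-- The Japanese bracket `⟨v⟩ = (1 + |v|²)^{1/2}`. -/
noncomputable def jap {d : ℕ} (v : EuclideanSpace ℝ (Fin d)) : ℝ :=
  Real.sqrt (1 + ‖v‖ ^ 2)

/-- The integrand whose integral over `w` is `d - 1` times the eigenvalue. -/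
noncomputable def integrand (d : ℕ) (v w : EuclideanSpace ℝ (Fin d)) : ℝ :=
  ‖w‖⁻¹ * ((d : ℝ) - 2 + (⟪v, w⟫_ℝ / (‖v‖ * ‖w‖)) ^ 2) * maxw d (v - w)

/-- The singular kernel `|w|⁻¹` truncated to the unit ball. -/
noncomputable def truncInv (d : ℕ) : EuclideanSpace ℝ (Fin d) → ℝ :=
  (Metric.ball 0 1).indicator fun w => ‖w‖⁻¹

lemma truncInv_nonneg {d : ℕ} (w : EuclideanSpace ℝ (Fin d)) : 0 ≤ truncInv d w :=
  Set.indicator_nonneg (fun _ _ => by positivity) w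

/-- In polar coordinates the integral is `∫₀¹ y ^ (d - 2) dy`, which is finite as `d ≥ 2`. -/
lemma integrable_truncInv {d : ℕ} (hd : 2 ≤ d) : Integrable (truncInv d) := by
  have : Nontrivial (EuclideanSpace ℝ (Fin d)) := by
    apply Module.nontrivial_of_finrank_pos (R := ℝ)
    simp; omega
  refine IntegrableOn.integrable_indicator ?_ measurableSet_ball
  refine (integrableOn_fun_norm_addHaar volume (f := fun y : ℝ => y⁻¹)).2 ?_
  have h : IntegrableOn (fun y : ℝ => y ^ (d - 2)) (Set.Ioo 0 1) :=
    ((continuous_pow (d - 2)).integrableOn_Icc (a := 0) (b := 1)).mono_set Set.Ioo_subset_Icc_self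
  refine h.congr_fun (fun y hy => ?_) measurableSet_Ioo
  have hy0 : y ≠ 0 := hy.1.ne'
  obtain ⟨n, rfl⟩ := Nat.exists_eq_add_of_le' hd
  simp [pow_succ, hy0]

lemma integrable_gauss (d : ℕ) :
    Integrable fun w : EuclideanSpace ℝ (Fin d) => Real.exp (-(1 / 2) * ‖w‖ ^ 2) := by
  -- A nonintegrable function would have Bochner integral zero.
  by_contra h
  have h1 := integral_undef h
  rw [GaussianFourier.integral_rexp_neg_mul_sq_norm (by norm_num)] at h1
  have : 0 < (Real.pi / (1 / 2)) ^
      (Module.finrank ℝ (EuclideanSpace ℝ (Fin d)) / 2 : ℝ) := by positivity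
  exact this.ne' h1

lemma jap_le {d : ℕ} (v : EuclideanSpace ℝ (Fin d)) : jap v ≤ 1 + ‖v‖ :=
  Real.sqrt_le_iff.2 ⟨by positivity, by nlinarith [norm_nonneg v]⟩

lemma one_le_jap {d : ℕ} (v : EuclideanSpace ℝ (Fin d)) : 1 ≤ jap v :=
  Real.one_le_sqrt.2 (by nlinarith [norm_nonneg v])

lemma norm_le_jap {d : ℕ} (v : EuclideanSpace ℝ (Fin d)) : ‖v‖ ≤ jap v :=
  Real.le_sqrt_of_sq_le (by linarith)

lemma cos_sq_le_one {d : ℕ} (v w : EuclideanSpace ℝ (Fin d)) :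
    (⟪v, w⟫_ℝ / (‖v‖ * ‖w‖)) ^ 2 ≤ 1 :=
  (sq_le_one_iff_abs_le_one _).2 (abs_real_inner_div_norm_mul_norm_le_one v w)

lemma integrand_nonneg {d : ℕ} (hd : 2 ≤ d) (v w : EuclideanSpace ℝ (Fin d)) :
    0 ≤ integrand d v w := by
  have : (0 : ℝ) ≤ (d : ℝ) - 2 := by
    have : (2 : ℝ) ≤ d := by exact_mod_cast hd
    linarith
  unfold integrand maxw
  positivity

lemma measurable_integrand (d : ℕ) (v : EuclideanSpace ℝ (Fin d)) :
    Measurable (integrand d v) := by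
  unfold integrand maxw
  fun_prop

/-- One-dimensional form of the upper bound, with `a = |w|`, `r = |v - w|` and `J = ⟨v⟩`. -/
lemma scalar_bound {a r J h : ℝ} (ha : 0 ≤ a) (hr : 0 ≤ r) (hJ : J ≤ 1 + r + a)
    (h0 : 0 ≤ h) (h1 : a < 1 → h = a⁻¹) :
    J * a⁻¹ * Real.exp (-r ^ 2) ≤ 2 * h + 3 * Real.exp (-(1 / 2) * r ^ 2) := by
  have hi : 0 ≤ a⁻¹ := inv_nonneg.2 ha
  set e := Real.exp (-(1 / 2) * r ^ 2) with he
  have he0 : 0 < e := Real.exp_pos _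
  have hsq : Real.exp (-r ^ 2) = e * e := by
    rw [he, ← Real.exp_add]; congr 1; ring
  have he1 : e ≤ 1 := Real.exp_le_one_iff.2 (by nlinarith)
  have hre : (1 + r) * e ≤ 2 := by
    have h2 : (1 / 2) * r ^ 2 + 1 ≤ Real.exp ((1 / 2) * r ^ 2) := Real.add_one_le_exp _
    have h3 : e * Real.exp ((1 / 2) * r ^ 2) = 1 := by
      rw [he, ← Real.exp_add]; simp
    nlinarith [sq_nonneg (r - 1), mul_le_mul_of_nonneg_left h2 he0.le]
  have hE : (1 + r) * (e * e) ≤ 2 * e := by nlinarith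
  have hee : e * e ≤ e := by nlinarith
  have haa : a⁻¹ * a ≤ 1 := by
    rcases eq_or_ne a 0 with rfl | h
    · simp
    · rw [inv_mul_cancel₀ h]
  have hmain : J * a⁻¹ * (e * e) ≤ a⁻¹ * ((1 + r) * (e * e)) + e := by
    calc J * a⁻¹ * (e * e) ≤ (1 + r + a) * a⁻¹ * (e * e) := by gcongr
      _ = a⁻¹ * ((1 + r) * (e * e)) + (a⁻¹ * a) * (e * e) := by ring
      _ ≤ a⁻¹ * ((1 + r) * (e * e)) + 1 * e := by gcongr
      _ = _ := by ring
  rw [hsq]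
  refine hmain.trans ?_
  rcases lt_or_ge a 1 with h | h
  · rw [h1 h]
    have : a⁻¹ * ((1 + r) * (e * e)) ≤ a⁻¹ * 2 := by gcongr; linarith
    linarith
  · have hi1 : a⁻¹ ≤ 1 := inv_le_one_of_one_le₀ h
    have : a⁻¹ * ((1 + r) * (e * e)) ≤ 1 * (2 * e) := by gcongr
    linarith

lemma integrand_le {d : ℕ} (hd : 2 ≤ d) (v w : EuclideanSpace ℝ (Fin d)) :
    integrand d v w ≤ (jap v)⁻¹ * (((d : ℝ) - 1) * Real.pi ^ (-(d : ℝ) / 2)) *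
      (2 * truncInv d w + 3 * Real.exp (-(1 / 2) * ‖v - w‖ ^ 2)) := by
  have hd' : (2 : ℝ) ≤ d := by exact_mod_cast hd
  have hJ := one_le_jap v
  have key := scalar_bound (J := jap v) (h := truncInv d w) (norm_nonneg w) (norm_nonneg (v - w))
    (by
      have h1 := jap_le v
      have h2 := norm_add_le (v - w) w
      rw [sub_add_cancel] at h2
      linarith)
    (truncInv_nonneg w)
    (fun h => Set.indicator_of_mem (by simpa using h) _)
  have hw : (d : ℝ) - 2 + (⟪v, w⟫_ℝ / (‖v‖ * ‖w‖)) ^ 2 ≤ d - 1 := by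
    linarith [cos_sq_le_one v w]
  unfold integrand maxw
  have hd1 : (0 : ℝ) ≤ d - 1 := by linarith
  calc _ ≤ ‖w‖⁻¹ * ((d : ℝ) - 1) *
        (Real.pi ^ (-(d : ℝ) / 2) * Real.exp (-‖v - w‖ ^ 2)) := by gcongr
    _ = (jap v)⁻¹ * (((d : ℝ) - 1) * Real.pi ^ (-(d : ℝ) / 2)) *
        (jap v * ‖w‖⁻¹ * Real.exp (-‖v - w‖ ^ 2)) := by
      field_simp
    _ ≤ _ := by gcongr

lemma integrable_majorant {d : ℕ} (hd : 2 ≤ d) (v : EuclideanSpace ℝ (Fin d)) :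
    Integrable fun w => 2 * truncInv d w + 3 * Real.exp (-(1 / 2) * ‖v - w‖ ^ 2) :=
  ((integrable_truncInv hd).const_mul 2).add
    (((integrable_gauss d).comp_sub_left v).const_mul 3)

lemma integrable_integrand {d : ℕ} (hd : 2 ≤ d) (v : EuclideanSpace ℝ (Fin d)) :
    Integrable (integrand d v) := by
  refine ((integrable_majorant hd v).const_mul
    ((jap v)⁻¹ * (((d : ℝ) - 1) * Real.pi ^ (-(d : ℝ) / 2)))).mono'
    (measurable_integrand d v).aestronglyMeasurable (ae_of_all _ fun w => ?_)
  rw [Real.norm_of_nonneg (integrand_nonneg hd v w)]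
  exact integrand_le hd v w

lemma integral_integrand_le {d : ℕ} (hd : 2 ≤ d) (v : EuclideanSpace ℝ (Fin d)) :
    ∫ w, integrand d v w ≤ (jap v)⁻¹ * (((d : ℝ) - 1) * Real.pi ^ (-(d : ℝ) / 2)) *
      (2 * (∫ w, truncInv d w) +
        3 * ∫ w : EuclideanSpace ℝ (Fin d), Real.exp (-(1 / 2) * ‖w‖ ^ 2)) := by
  refine (integral_mono (integrable_integrand hd v) ((integrable_majorant hd v).const_mul _)
    (integrand_le hd v)).trans_eq ?_
  rw [integral_const_mul, integral_add ((integrable_truncInv hd).const_mul 2)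
    (((integrable_gauss d).comp_sub_left v).const_mul 3), integral_const_mul, integral_const_mul,
    integral_sub_left_eq_self (fun w : EuclideanSpace ℝ (Fin d) => Real.exp (-(1 / 2) * ‖w‖ ^ 2))]

lemma le_integrand {d : ℕ} (hd : 2 ≤ d) {v w : EuclideanSpace ℝ (Fin d)} (hv : v ≠ 0)
    (hw : w ∈ Metric.ball (v + ‖v‖⁻¹ • v) (1 / 2)) :
    (jap v)⁻¹ * (2 / 45 * (Real.pi ^ (-(d : ℝ) / 2) * Real.exp (-(9 / 4)))) ≤
      integrand d v w := by
  have hd' : (2 : ℝ) ≤ d := by exact_mod_cast hd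
  have hv0 : 0 < ‖v‖ := norm_pos_iff.2 hv
  have hJ := one_le_jap v
  have hJ' := norm_le_jap v
  obtain ⟨z, rfl⟩ : ∃ z, w = v + ‖v‖⁻¹ • v + z := ⟨w - (v + ‖v‖⁻¹ • v), by abel⟩
  have hz : ‖z‖ < 1 / 2 := by simpa [mem_ball_iff_norm] using hw
  have he : ‖‖v‖⁻¹ • v‖ = 1 := by
    rw [norm_smul, norm_inv, norm_norm, inv_mul_cancel₀ hv0.ne']
  set w := v + ‖v‖⁻¹ • v + z with hwdef
  have hsub : ‖v - w‖ ≤ 3 / 2 := by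
    have : v - w = -(‖v‖⁻¹ • v + z) := by rw [hwdef]; abel
    rw [this, norm_neg]
    linarith [norm_add_le (‖v‖⁻¹ • v) z]
  have hwle : ‖w‖ ≤ ‖v‖ + 3 / 2 := by
    linarith [norm_add_le (v + ‖v‖⁻¹ • v) z, norm_add_le v (‖v‖⁻¹ • v)]
  have hin : ‖v‖ * (‖v‖ + 1 / 2) ≤ ⟪v, w⟫_ℝ := by
    have h1 : ⟪v, w⟫_ℝ = ‖v‖ ^ 2 + ‖v‖ + ⟪v, z⟫_ℝ := by
      rw [hwdef, inner_add_right, inner_add_right, inner_smul_right, real_inner_self_eq_norm_sq]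
      field_simp
    have h2 : -(‖v‖ * ‖z‖) ≤ ⟪v, z⟫_ℝ := neg_le_of_abs_le (abs_real_inner_le_norm v z)
    rw [h1]
    nlinarith
  have hw0 : 0 < ‖w‖ := by
    rw [norm_pos_iff]
    intro h
    rw [h, inner_zero_right] at hin
    have : 0 < ‖v‖ * (‖v‖ + 1 / 2) := by positivity
    linarith
  have hcos : 1 / 3 ≤ ⟪v, w⟫_ℝ / (‖v‖ * ‖w‖) := by
    rw [le_div_iff₀ (by positivity)]
    nlinarith
  have hsq : 1 / 9 ≤ (d : ℝ) - 2 + (⟪v, w⟫_ℝ / (‖v‖ * ‖w‖)) ^ 2 := by nlinarith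
  have hinv : (jap v)⁻¹ * (2 / 5) ≤ ‖w‖⁻¹ := by
    rw [inv_mul_eq_div, div_le_iff₀ (by linarith), ← div_eq_inv_mul, le_div_iff₀ hw0]
    linarith
  have hexp : Real.exp (-(9 / 4)) ≤ Real.exp (-‖v - w‖ ^ 2) := by
    apply Real.exp_le_exp.2
    nlinarith [norm_nonneg (v - w)]
  unfold integrand maxw
  calc _ = (jap v)⁻¹ * (2 / 5) * (1 / 9) *
        (Real.pi ^ (-(d : ℝ) / 2) * Real.exp (-(9 / 4))) := by ring
    _ ≤ _ := by gcongr

lemma le_integral_integrand {d : ℕ} (hd : 2 ≤ d) {v : EuclideanSpace ℝ (Fin d)} (hv : v ≠ 0) :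
    (jap v)⁻¹ * (2 / 45 * (Real.pi ^ (-(d : ℝ) / 2) * Real.exp (-(9 / 4)))) *
      volume.real (Metric.ball (0 : EuclideanSpace ℝ (Fin d)) (1 / 2)) ≤
      ∫ w, integrand d v w := by
  have hvol : volume.real (Metric.ball (0 : EuclideanSpace ℝ (Fin d)) (1 / 2)) =
      volume.real (Metric.ball (v + ‖v‖⁻¹ • v) (1 / 2)) := by
    simp only [Measure.real, Measure.addHaar_ball_center]
  rw [hvol]
  refine le_trans ?_ (setIntegral_le_integral (s := Metric.ball (v + ‖v‖⁻¹ • v) (1 / 2))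
    (integrable_integrand hd v) (ae_of_all _ (integrand_nonneg hd v)))
  exact setIntegral_ge_of_const_le_real measurableSet_ball measure_ball_lt_top.ne
    (fun w hw => le_integrand hd hv hw) (integrable_integrand hd v).integrableOn

/-- **Asymptotics of the eigenvalue of the Landau diffusion matrix on `v^⊥`:**
for `d ≥ 2` there is `C ≥ 1`, depending only on `d`, such that for all `v ≠ 0`,
`(d-1)⁻¹ ∫ |v_*|⁻¹ (d - 2 + (v·v_*/(|v||v_*|))²) μ(v - v_*) dv_* ≃ ⟨v⟩⁻¹`. -/
theorem lambda_two_asymptotics (d : ℕ) (hd : 2 ≤ d) :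
    ∃ C : ℝ, 1 ≤ C ∧ ∀ v : EuclideanSpace ℝ (Fin d), v ≠ 0 →
      (1 / C) * (jap v)⁻¹
          ≤ (1 / ((d : ℝ) - 1)) * ∫ w : EuclideanSpace ℝ (Fin d),
              ‖w‖⁻¹ * ((d : ℝ) - 2 + (⟪v, w⟫_ℝ / (‖v‖ * ‖w‖)) ^ 2) * maxw d (v - w) ∧
        (1 / ((d : ℝ) - 1)) * (∫ w : EuclideanSpace ℝ (Fin d),
              ‖w‖⁻¹ * ((d : ℝ) - 2 + (⟪v, w⟫_ℝ / (‖v‖ * ‖w‖)) ^ 2) * maxw d (v - w))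
          ≤ C * (jap v)⁻¹ := by
  have hd' : (0 : ℝ) < (d : ℝ) - 1 := by
    have : (2 : ℝ) ≤ d := by exact_mod_cast hd
    linarith
  set K := Real.pi ^ (-(d : ℝ) / 2) * (2 * (∫ w, truncInv d w) +
    3 * ∫ w : EuclideanSpace ℝ (Fin d), Real.exp (-(1 / 2) * ‖w‖ ^ 2)) with hK
  set k := 1 / ((d : ℝ) - 1) * ((2 / 45 * (Real.pi ^ (-(d : ℝ) / 2) * Real.exp (-(9 / 4)))) *
    volume.real (Metric.ball (0 : EuclideanSpace ℝ (Fin d)) (1 / 2))) with hk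
  have hvol : 0 < volume.real (Metric.ball (0 : EuclideanSpace ℝ (Fin d)) (1 / 2)) :=
    ENNReal.toReal_pos (Metric.measure_ball_pos _ _ (by norm_num)).ne' measure_ball_lt_top.ne
  have hk0 : 0 < k := by positivity
  refine ⟨max 1 (max K k⁻¹), le_max_left _ _, fun v hv => ?_⟩
  have hJ : 0 < jap v := zero_lt_one.trans_le (one_le_jap v)
  change _ ≤ 1 / ((d : ℝ) - 1) * (∫ w, integrand d v w) ∧
    1 / ((d : ℝ) - 1) * (∫ w, integrand d v w) ≤ _
  constructor
  · have hC : 1 / max 1 (max K k⁻¹) ≤ k := by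
      rw [one_div]
      exact inv_le_of_inv_le₀ hk0 ((le_max_right _ _).trans (le_max_right _ _))
    calc _ ≤ k * (jap v)⁻¹ := by gcongr
      _ = 1 / ((d : ℝ) - 1) * ((jap v)⁻¹ *
          (2 / 45 * (Real.pi ^ (-(d : ℝ) / 2) * Real.exp (-(9 / 4)))) *
          volume.real (Metric.ball (0 : EuclideanSpace ℝ (Fin d)) (1 / 2))) := by rw [hk]; ring
      _ ≤ _ := by
        gcongr
        exact le_integral_integrand hd hv
  · have hC : K ≤ max 1 (max K k⁻¹) := (le_max_left _ _).trans (le_max_right _ _)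
    calc _ ≤ 1 / ((d : ℝ) - 1) *
          ((jap v)⁻¹ * (((d : ℝ) - 1) * Real.pi ^ (-(d : ℝ) / 2)) *
          (2 * (∫ w, truncInv d w) +
            3 * ∫ w : EuclideanSpace ℝ (Fin d), Real.exp (-(1 / 2) * ‖w‖ ^ 2))) := by
          gcongr
          exact integral_integrand_le hd v
      _ = K * (jap v)⁻¹ := by
          rw [hK]
          field_simp
      _ ≤ _ := by gcongr
end

section
/- Let d ≥ 2 and v₀ ∈ ℝ^d. There exists a constant C ≥ 1, depending only on d and |v₀|, such that for every v ∈ ℝ^d with v ≠ 0 and v ≠ v₀, and every e ∈ ℝ^d: ⟨v⟩^{−1} |P_v^⊥ e|² + ⟨v⟩^{−3} |P_v e|² ≤ C (⟨v−v₀⟩^{−1} |P_{v−v₀}^⊥ e|² + ⟨v−v₀⟩^{−3} |P_{v−v₀} e|²). -/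
/-!
The anisotropic weight is, up to the scalar factor `⟨w⟩⁻³`, a quadratic polynomial in `w`: since
`⟨w⟩² |P_w^⊥ e|² + |P_w e|² = |e|² + |w|² |P_w^⊥ e|²`, it equals `⟨w⟩⁻³ (|e|² + G(w))`, where
`G(w) = |w|²|e|² - ⟪w, e⟫² = |w ∧ e|²` is the Gram determinant (`weight_eq`). As a nonnegative
quadratic form in `w`, `G` satisfies `G(w + v₀) ≤ 2 G(w) + 2 G(v₀)`, and `G(v₀) ≤ |v₀|²|e|²`;
hence `|e|² + G(v) ≤ 2⟨v₀⟩² (|e|² + G(v - v₀))`. Together with the Peetre inequality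
`⟨v - v₀⟩ ≤ √2 ⟨v₀⟩ ⟨v⟩` (`jap_sub_le`), this gives the claim with `C = (√2 ⟨v₀⟩)⁵`.
-/

open scoped InnerProductSpace

/-- The orthogonal projection of `e` onto the line `ℝ w` (for `w ≠ 0`). -/
noncomputable def projL {d : ℕ} (w e : EuclideanSpace ℝ (Fin d)) :
    EuclideanSpace ℝ (Fin d) :=
  (⟪w, e⟫_ℝ / ‖w‖ ^ 2) • w

/-- The orthogonal projection of `e` onto the hyperplane `w^⊥` (for `w ≠ 0`). -/
noncomputable def projP {d : ℕ} (w e : EuclideanSpace ℝ (Fin d)) :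
    EuclideanSpace ℝ (Fin d) :=
  e - projL w e

lemma jap_pos {d : ℕ} (v : EuclideanSpace ℝ (Fin d)) : 0 < jap v :=
  Real.sqrt_pos.mpr (by positivity)

lemma jap_sq {d : ℕ} (v : EuclideanSpace ℝ (Fin d)) : jap v ^ 2 = 1 + ‖v‖ ^ 2 :=
  Real.sq_sqrt (by positivity)

/-- The Gram determinant `|w|²|e|² - ⟪w, e⟫²`, i.e. `|w ∧ e|²`. -/
noncomputable def gramDet {d : ℕ} (w e : EuclideanSpace ℝ (Fin d)) : ℝ :=
  ‖w‖ ^ 2 * ‖e‖ ^ 2 - ⟪w, e⟫_ℝ ^ 2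

lemma gramDet_nonneg {d : ℕ} (w e : EuclideanSpace ℝ (Fin d)) : 0 ≤ gramDet w e := by
  have h := sq_le_sq' (neg_le_of_abs_le (abs_real_inner_le_norm w e)) (real_inner_le_norm w e)
  rw [mul_pow] at h
  exact sub_nonneg.mpr h

/-- The parallelogram law for the quadratic form `gramDet · e`, with the nonnegative term
`gramDet (x - y) e` dropped. -/
lemma gramDet_add_le {d : ℕ} (x y e : EuclideanSpace ℝ (Fin d)) :
    gramDet (x + y) e ≤ 2 * gramDet x e + 2 * gramDet y e := by
  have h := gramDet_nonneg (x - y) e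
  unfold gramDet at *
  rw [norm_sub_sq_real, inner_sub_left] at h
  rw [norm_add_sq_real, inner_add_left]
  nlinarith

/-- The anisotropic weight as a scalar multiple of a quadratic polynomial in `w`. -/
lemma weight_eq {d : ℕ} (w e : EuclideanSpace ℝ (Fin d)) (hw : w ≠ 0) :
    (jap w)⁻¹ * ‖projP w e‖ ^ 2 + ((jap w) ^ 3)⁻¹ * ‖projL w e‖ ^ 2
      = ((jap w) ^ 3)⁻¹ * (‖e‖ ^ 2 + gramDet w e) := by
  have hn : ‖w‖ ≠ 0 := norm_ne_zero_iff.mpr hw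
  have hL : ‖projL w e‖ ^ 2 = ⟪w, e⟫_ℝ ^ 2 / ‖w‖ ^ 2 := by
    rw [projL, norm_smul, mul_pow, Real.norm_eq_abs, sq_abs]
    field_simp
  have hP : ‖projP w e‖ ^ 2 = ‖e‖ ^ 2 - ⟪w, e⟫_ℝ ^ 2 / ‖w‖ ^ 2 := by
    rw [projP, norm_sub_sq_real, hL, projL, inner_smul_right, real_inner_comm]
    field_simp
    ring
  have hJ : (jap w)⁻¹ = ((jap w) ^ 3)⁻¹ * (1 + ‖w‖ ^ 2) := by
    have := (jap_pos w).ne'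
    rw [← jap_sq]
    field_simp
  rw [hJ, hP, hL, gramDet]
  field_simp
  ring

/-- Peetre's inequality for the Japanese bracket. -/
lemma jap_sub_le {d : ℕ} (v v₀ : EuclideanSpace ℝ (Fin d)) :
    jap (v - v₀) ≤ √2 * jap v₀ * jap v := by
  have h1 := jap_pos v₀
  have h2 := jap_pos v
  refine (sq_le_sq₀ (jap_pos _).le (by positivity)).mp ?_
  rw [mul_pow, mul_pow, Real.sq_sqrt (by norm_num), jap_sq, jap_sq, jap_sq]
  have h3 : ‖v - v₀‖ ^ 2 ≤ (‖v‖ + ‖v₀‖) ^ 2 := by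
    gcongr
    exact norm_sub_le v v₀
  nlinarith [sq_nonneg (‖v‖ - ‖v₀‖), mul_nonneg (sq_nonneg ‖v‖) (sq_nonneg ‖v₀‖)]

/-- **Comparison of anisotropic weights under translation of the base point:**
for `d ≥ 2` and `v₀ ∈ ℝ^d` there is `C ≥ 1`, depending only on `d` and `|v₀|`,
such that for all `v ∉ {0, v₀}` and all `e`,
`⟨v⟩⁻¹|P_v^⊥ e|² + ⟨v⟩⁻³|P_v e|² ≤ C (⟨v-v₀⟩⁻¹|P_{v-v₀}^⊥ e|² + ⟨v-v₀⟩⁻³|P_{v-v₀} e|²)`. -/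
theorem anisotropic_weight_translation (d : ℕ) (hd : 2 ≤ d)
    (v₀ : EuclideanSpace ℝ (Fin d)) :
    ∃ C : ℝ, 1 ≤ C ∧ ∀ v : EuclideanSpace ℝ (Fin d), v ≠ 0 → v ≠ v₀ →
      ∀ e : EuclideanSpace ℝ (Fin d),
        (jap v)⁻¹ * ‖projP v e‖ ^ 2 + ((jap v) ^ 3)⁻¹ * ‖projL v e‖ ^ 2
          ≤ C * ((jap (v - v₀))⁻¹ * ‖projP (v - v₀) e‖ ^ 2
              + ((jap (v - v₀)) ^ 3)⁻¹ * ‖projL (v - v₀) e‖ ^ 2) := by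
  set m : ℝ := √2 * jap v₀ with hm
  have hm2 : m ^ 2 = 2 * (1 + ‖v₀‖ ^ 2) := by
    rw [hm, mul_pow, Real.sq_sqrt (by norm_num), jap_sq]
  have hm0 : 0 < m := mul_pos (by positivity) (jap_pos v₀)
  have hm1 : 1 ≤ m := by nlinarith [sq_nonneg ‖v₀‖]
  refine ⟨m ^ 5, one_le_pow₀ hm1, fun v hv hv0 e => ?_⟩
  rw [weight_eq v e hv, weight_eq _ e (sub_ne_zero.mpr hv0)]
  have hJ := jap_pos v
  have hK := jap_pos (v - v₀)
  have hG := gramDet_nonneg (v - v₀) e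
  have hscal : ((jap v) ^ 3)⁻¹ ≤ m ^ 3 * ((jap (v - v₀)) ^ 3)⁻¹ := by
    rw [← div_eq_mul_inv, inv_eq_one_div, div_le_div_iff₀ (by positivity) (by positivity),
      one_mul, ← mul_pow]
    gcongr
    exact jap_sub_le v v₀
  have hquad : ‖e‖ ^ 2 + gramDet v e ≤ m ^ 2 * (‖e‖ ^ 2 + gramDet (v - v₀) e) := by
    have h := gramDet_add_le (v - v₀) v₀ e
    rw [sub_add_cancel] at h
    have h0 : gramDet v₀ e ≤ ‖v₀‖ ^ 2 * ‖e‖ ^ 2 := sub_le_self _ (sq_nonneg _)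
    rw [hm2]
    nlinarith [sq_nonneg ‖e‖, mul_nonneg (sq_nonneg ‖v₀‖) hG]
  calc ((jap v) ^ 3)⁻¹ * (‖e‖ ^ 2 + gramDet v e)
      ≤ (m ^ 3 * ((jap (v - v₀)) ^ 3)⁻¹) * (m ^ 2 * (‖e‖ ^ 2 + gramDet (v - v₀) e)) :=
        mul_le_mul hscal hquad (add_nonneg (sq_nonneg _) (gramDet_nonneg v e)) (by positivity)
    _ = m ^ 5 * (((jap (v - v₀)) ^ 3)⁻¹ * (‖e‖ ^ 2 + gramDet (v - v₀) e)) := by ring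
end
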